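/- Every Z₂Z₄[ξ]-linear code C ⊆ R₂^r × R₄^s is permutation equivalent to a Z₂Z₄[ξ]-linear code in standard form: there exist nonnegative integers k₀, k₁, k₂, a permutation of the first r coordinates, a permutation of the last s coordinates, and matrices Ā₀₁, S with entries in R₂ and T, A₀₁, A₀₂, A₁₂ with entries in R₄, such that the permuted code is exactly the set of R₄-linear combinations (via the action *) of the rows of the block matrix G = [[I_{k₀}, Ā₀₁ | 0, 0, 2T], [0, S | I_{k₁}, A₀₁, A₀₂], [0, 0 | 0, 2I_{k₂}, 2A₁₂]], where the first two column blocks (r columns in total) have entries in R₂ and the last three column blocks (of widths k₁, k₂, s−k₁−k₂) have entries in R₄. -/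

import Mathlib

set_option synthInstance.maxHeartbeats 1000000
set_option maxHeartbeats 2000000

noncomputable section
open Polynomial

abbrev Z4 : Type := ZMod 4
abbrev Z2 : Type := ZMod 2

/-- The mod 2 reduction map `Z₄ → Z₂`. -/
def bar : Z4 →+* Z2 := ZMod.castHom (m := 2) (by norm_num) Z2

/-- The ring `R₄ = Z₄[x]/⟨h⟩` (for `h` basic primitive, the Galois ring `GR(4,m)`). -/
abbrev R4 (h : Z4[X]) : Type := Z4[X] ⧸ Ideal.span {h}

/-- The ring `R₂ = Z₂[x]/⟨h̄⟩` (for `h` basic primitive, the field `F_{2^m}`). -/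
abbrev R2 (h : Z4[X]) : Type := Z2[X] ⧸ Ideal.span {h.map bar}

/-- `ξ`, the class of `x` in `R₄`. -/
def xi (h : Z4[X]) : R4 h := Ideal.Quotient.mk _ X

/-- `ξ̄`, the class of `x` in `R₂`. -/
def xibar (h : Z4[X]) : R2 h := Ideal.Quotient.mk _ X

/-- The coefficientwise mod 2 reduction `R₄ → R₂`. -/
def barR (h : Z4[X]) : R4 h →+* R2 h :=
  Ideal.quotientMap (Ideal.span {h.map bar}) (Polynomial.mapRingHom bar)
    (by
      rw [Ideal.span_le]
      intro p hp
      simp only [Set.mem_singleton_iff] at hp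
      subst hp
      exact Ideal.mem_comap.mpr (Ideal.subset_span (by simp)))

/-- The canonical representative (of degree `< deg h`) of an element of `R₄`. -/
def rep4 (h : Z4[X]) (α : R4 h) : Z4[X] := Quotient.out α %ₘ h

/-- The canonical representative (of degree `< deg h̄`) of an element of `R₂`. -/
def rep2 (h : Z4[X]) (α : R2 h) : Z2[X] := Quotient.out α %ₘ (h.map bar)

/-- The Frobenius map `θ₄ : ∑ vᵢ ξ^i ↦ ∑ vᵢ ξ^{2i}` of `R₄`, as a bare function:
substitute `ξ²` in the canonical representative. -/
def thetaFun4 (h : Z4[X]) (α : R4 h) : R4 h := Polynomial.aeval (xi h ^ 2) (rep4 h α)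

/-- The Frobenius map `θ₂ : ∑ vᵢ ξ̄^i ↦ ∑ vᵢ ξ̄^{2i}` of `R₂`, as a bare function. -/
def thetaFun2 (h : Z4[X]) (α : R2 h) : R2 h := Polynomial.aeval (xibar h ^ 2) (rep2 h α)

/-- A lift `ι : R₂ → R₄` with `ι` mod 2 the identity: lift the coefficients of the
canonical representative from `{0,1}`. -/
def iota (h : Z4[X]) (α : R2 h) : R4 h :=
  Ideal.Quotient.mk _ ((rep2 h α).sum fun i a => C ((a.val : Z4)) * X ^ i)

/-- `h` is a monic basic primitive polynomial of degree `m`:  `h` is monic, its mod 2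
reduction `h̄` is irreducible over `Z₂`, and the root `ξ̄` of `h̄` is a primitive
element, i.e. has multiplicative order `2^m - 1`. -/
def BasicPrimitive (h : Z4[X]) (m : ℕ) : Prop :=
  h.Monic ∧ h.natDegree = m ∧ Irreducible (h.map bar) ∧ orderOf (xibar h) = 2 ^ m - 1

/-- The scalar multiplication `γ * (α,β) = (γ̄α, γβ)` making `R₂^r × R₄^s` (or any
mixed-alphabet tuple space) an `R₄`-module. -/
def smulStar (h : Z4[X]) {α β : Type*} (γ : R4 h) (v : (α → R2 h) × (β → R4 h)) :
    (α → R2 h) × (β → R4 h) :=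
  (fun i => barR h γ * v.1 i, fun j => γ * v.2 j)


/-- A `Z₂Z₄[ξ]`-linear code: an `R₄`-submodule of `R₂^r × R₄^s` (as a set). -/
def IsZ2Z4Linear (h : Z4[X]) {r s : ℕ} (C : Set ((Fin r → R2 h) × (Fin s → R4 h))) : Prop :=
  0 ∈ C ∧ (∀ u ∈ C, ∀ v ∈ C, u + v ∈ C) ∧ ∀ γ : R4 h, ∀ u ∈ C, smulStar h γ u ∈ C

/-! ### Standard generator and parity-check matrices -/

/-- The set of all `R₄`-linear combinations (via the action `*`) of a finite family of
rows in `R₂^α × R₄^β`. -/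
def rowSpan (h : Z4[X]) {ι α β : Type*} [Fintype ι]
    (rows : ι → (α → R2 h) × (β → R4 h)) : Set ((α → R2 h) × (β → R4 h)) :=
  {v | ∃ c : ι → R4 h, v = ∑ i, smulStar h (c i) (rows i)}

/-- The rows of the standard form generator matrix
`G = [[I_{k₀}, Ā₀₁ | 0, 0, 2T], [0, S | I_{k₁}, A₀₁, A₀₂], [0, 0 | 0, 2I_{k₂}, 2A₁₂]]`. -/
def stdGenRows (h : Z4[X]) {r s k0 k1 k2 : ℕ}
    (A01b : Matrix (Fin k0) (Fin (r - k0)) (R2 h))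
    (S : Matrix (Fin k1) (Fin (r - k0)) (R2 h))
    (T : Matrix (Fin k0) (Fin (s - k1 - k2)) (R4 h))
    (A01 : Matrix (Fin k1) (Fin k2) (R4 h))
    (A02 : Matrix (Fin k1) (Fin (s - k1 - k2)) (R4 h))
    (A12 : Matrix (Fin k2) (Fin (s - k1 - k2)) (R4 h)) :
    (Fin k0 ⊕ Fin k1 ⊕ Fin k2) →
      ((Fin k0 ⊕ Fin (r - k0)) → R2 h) × ((Fin k1 ⊕ Fin k2 ⊕ Fin (s - k1 - k2)) → R4 h) :=
  fun row =>
    (fun col =>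
      match row, col with
      | .inl i, .inl j => if i = j then 1 else 0
      | .inl i, .inr j => A01b i j
      | .inr (.inl i), .inr j => S i j
      | _, _ => 0,
     fun col =>
      match row, col with
      | .inl i, .inr (.inr j) => 2 * T i j
      | .inr (.inl i), .inl j => if i = j then 1 else 0
      | .inr (.inl i), .inr (.inl j) => A01 i j
      | .inr (.inl i), .inr (.inr j) => A02 i j
      | .inr (.inr i), .inr (.inl j) => if i = j then 2 else 0
      | .inr (.inr i), .inr (.inr j) => 2 * A12 i j
      | _, _ => 0)

/-- `C` is (permutation equivalent to) a code of type `(r,s;k₀;k₁,k₂)`:  after a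
permutation of the first `r` and of the last `s` coordinates (encoded by the
relabelings `e2`, `e4`) the code is exactly the `R₄`-span of the rows of the standard
form generator matrix. -/
def IsTypeCode (h : Z4[X]) (r s k0 k1 k2 : ℕ)
    (C : Set ((Fin r → R2 h) × (Fin s → R4 h))) : Prop :=
  ∃ (A01b : Matrix (Fin k0) (Fin (r - k0)) (R2 h))
    (S : Matrix (Fin k1) (Fin (r - k0)) (R2 h))
    (T : Matrix (Fin k0) (Fin (s - k1 - k2)) (R4 h))
    (A01 : Matrix (Fin k1) (Fin k2) (R4 h))
    (A02 : Matrix (Fin k1) (Fin (s - k1 - k2)) (R4 h))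
    (A12 : Matrix (Fin k2) (Fin (s - k1 - k2)) (R4 h))
    (e2 : Fin r ≃ (Fin k0 ⊕ Fin (r - k0)))
    (e4 : Fin s ≃ (Fin k1 ⊕ Fin k2 ⊕ Fin (s - k1 - k2))),
    (fun v : (Fin r → R2 h) × (Fin s → R4 h) => (v.1 ∘ e2.symm, v.2 ∘ e4.symm)) '' C
      = rowSpan h (stdGenRows h A01b S T A01 A02 A12)

/-- The inner product
`⟨u,v⟩ = 2 ∑ᵢ ι(aᵢdᵢ) + ∑ⱼ bⱼeⱼ ∈ R₄` on `R₂^α × R₄^β`. -/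
def innerP (h : Z4[X]) {α β : Type*} [Fintype α] [Fintype β]
    (u v : (α → R2 h) × (β → R4 h)) : R4 h :=
  2 * ∑ i, iota h (u.1 i * v.1 i) + ∑ j, u.2 j * v.2 j

/-- The dual code `C⊥ = {v : ⟨u,v⟩ = 0 for all u ∈ C}`. -/
def dualCode (h : Z4[X]) {α β : Type*} [Fintype α] [Fintype β]
    (C : Set ((α → R2 h) × (β → R4 h))) : Set ((α → R2 h) × (β → R4 h)) :=
  {v | ∀ u ∈ C, innerP h u v = 0}

/-- The rows of the standard form parity-check matrix
`H = [[−Ā₀₁ᵀ, I_{r−k₀} | −2Sᵀ, 0, 0], [−Tᵀ, 0 | −A₀₂ᵀ + A₁₂ᵀA₀₁ᵀ, −A₁₂ᵀ, I_{s−k₁−k₂}],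
[0, 0 | −2A₀₁ᵀ, 2I_{k₂}, 0]]`. -/
def stdParityRows (h : Z4[X]) {r s k0 k1 k2 : ℕ}
    (A01b : Matrix (Fin k0) (Fin (r - k0)) (R2 h))
    (S : Matrix (Fin k1) (Fin (r - k0)) (R2 h))
    (T : Matrix (Fin k0) (Fin (s - k1 - k2)) (R4 h))
    (A01 : Matrix (Fin k1) (Fin k2) (R4 h))
    (A02 : Matrix (Fin k1) (Fin (s - k1 - k2)) (R4 h))
    (A12 : Matrix (Fin k2) (Fin (s - k1 - k2)) (R4 h)) :
    (Fin (r - k0) ⊕ Fin (s - k1 - k2) ⊕ Fin k2) →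
      ((Fin k0 ⊕ Fin (r - k0)) → R2 h) × ((Fin k1 ⊕ Fin k2 ⊕ Fin (s - k1 - k2)) → R4 h) :=
  fun row =>
    (fun col =>
      match row, col with
      | .inl i, .inl j => -(A01b j i)
      | .inl i, .inr j => if i = j then 1 else 0
      | .inr (.inl i), .inl j => -(barR h (T j i))
      | _, _ => 0,
     fun col =>
      match row, col with
      | .inl i, .inl j => -(2 * iota h (S j i))
      | .inr (.inl i), .inl j => -(A02 j i) + ∑ c, A12 c i * A01 j c
      | .inr (.inl i), .inr (.inl j) => -(A12 j i)
      | .inr (.inl i), .inr (.inr j) => if i = j then 1 else 0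
      | .inr (.inr i), .inl j => -(2 * A01 j i)
      | .inr (.inr i), .inr (.inl j) => if i = j then 2 else 0
      | _, _ => 0)

/-!
Let `K` be the residue field of `R`, whose maximal ideal is generated by `π` with `π ^ 2 = 0`; here
`R = R₄`, `K = R₂` and `π = 2`. An entry of a codeword is a unit, a unit times `π`, or zero, so
Gaussian elimination works in three rounds. First, clear with unit pivots of `R`, in columns `P₁`:
the remaining words, those which vanish on `P₁`, have all their `R`-entries in `πR`. Among these
take the words whose `K`-part is zero and clear with pivots `π`, in columns `P₂`. Finally, take the
words vanishing on `P₁` and `P₂` and clear their `K`-parts, in columns `P₀`; a word which survives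
all three rounds is zero. The three families of pivot rows therefore generate the code, and
subtracting rows of the third family from those of the first gives the standard form.
-/

section Pivots

variable {R M L ι : Type*} [CommRing R] [AddCommGroup M] [Module R M] [AddCommGroup L] [Module R L]

/-- Rows `w i`, `i ∈ P`, in which the columns `f j`, `j ∈ P`, form `e` times an identity matrix.
The values of `w` outside `P` are irrelevant. -/
structure IsPivotFamily (f : ι → M →ₗ[R] L) (e : L) (P : Finset ι) (w : ι → M) : Prop where
  apply_self : ∀ i ∈ P, f i (w i) = e
  apply_of_ne : ∀ i ∈ P, ∀ j ∈ P, i ≠ j → f j (w i) = 0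

/-- The vectors on which all columns `f j`, `j ∈ P`, vanish. -/
def commonKer (f : ι → M →ₗ[R] L) (P : Finset ι) : Submodule R M :=
  ⨅ j ∈ P, LinearMap.ker (f j)

variable {f : ι → M →ₗ[R] L} {e : L} {P : Finset ι} {w : ι → M}

@[simp]
theorem mem_commonKer {v : M} : v ∈ commonKer f P ↔ ∀ j ∈ P, f j v = 0 := by
  simp only [commonKer, Submodule.mem_iInf, LinearMap.mem_ker]

namespace IsPivotFamily

theorem insert_sub_smul [DecidableEq ι] (hw : IsPivotFamily f e P w) {j : ι} (hj : j ∉ P) {x : M}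
    (hxj : f j x = e) (hxP : x ∈ commonKer f P) {a : ι → R} (ha : ∀ i ∈ P, a i • e = f j (w i)) :
    IsPivotFamily f e (insert j P) (Function.update (fun i => w i - a i • x) j x) := by
  have hne : ∀ i ∈ P, i ≠ j := fun i hi hij => hj (hij ▸ hi)
  rw [mem_commonKer] at hxP
  refine ⟨fun i hi => ?_, fun i hi l hl hil => ?_⟩
  · rcases Finset.mem_insert.1 hi with rfl | hiP
    · simpa using hxj
    · simp [hne i hiP, hxP i hiP, hw.apply_self i hiP]
  · rcases Finset.mem_insert.1 hi with rfl | hiP <;> rcases Finset.mem_insert.1 hl with rfl | hlP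
    · exact absurd rfl hil
    · simpa using hxP l hlP
    · simp [hil, hxj, ha i hiP]
    · simp [hne i hiP, hxP l hlP, hw.apply_of_ne i hiP l hlP hil]

theorem apply_embedding {κ : Type*} [DecidableEq κ] (hw : IsPivotFamily f e P w) (p : κ ↪ ι)
    (hp : ∀ i, p i ∈ P) (i j : κ) : f (p j) (w (p i)) = if i = j then e else 0 := by
  split_ifs with hij
  · rw [hij, hw.apply_self _ (hp j)]
  · exact hw.apply_of_ne _ (hp i) _ (hp j) (p.injective.ne hij)

theorem sub (hw : IsPivotFamily f e P w) {x : ι → M} (hx : ∀ i, x i ∈ commonKer f P) :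
    IsPivotFamily f e P (w - x) := by
  simp only [mem_commonKer] at hx
  refine ⟨fun i hi => ?_, fun i hi j hj hij => ?_⟩
  · rw [Pi.sub_apply, map_sub, hw.apply_self i hi, hx i i hi, sub_zero]
  · rw [Pi.sub_apply, map_sub, hw.apply_of_ne i hi j hj hij, hx i j hj, sub_zero]

theorem exists_sub_mem_commonKer (hw : IsPivotFamily f e P w) {v : M}
    (hv : ∀ j ∈ P, f j v ∈ R ∙ e) : ∃ u ∈ Submodule.span R (w '' P), v - u ∈ commonKer f P := by
  simp only [Submodule.mem_span_singleton] at hv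
  choose! a ha using hv
  refine ⟨∑ i ∈ P, a i • w i, Submodule.sum_mem _ fun i hi =>
    Submodule.smul_mem _ _ (Submodule.subset_span (Set.mem_image_of_mem w hi)), ?_⟩
  refine mem_commonKer.2 fun j hj => ?_
  have hsum : ∑ i ∈ P, a i • f j (w i) = a j • f j (w j) :=
    Finset.sum_eq_single_of_mem j hj fun i hi hij => by
      rw [hw.apply_of_ne i hi j hj hij, smul_zero]
  rw [map_sub, map_sum, sub_eq_zero, ← ha j hj]
  simp only [map_smul, hsum, hw.apply_self j hj]

theorem span_sup_inf_commonKer (hw : IsPivotFamily f e P w) {N : Submodule R M}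
    (hwN : ∀ i ∈ P, w i ∈ N) (hN : ∀ v ∈ N, ∀ j ∈ P, f j v ∈ R ∙ e) :
    Submodule.span R (w '' P) ⊔ N ⊓ commonKer f P = N := by
  have hspan : Submodule.span R (w '' P) ≤ N :=
    Submodule.span_le.2 (Set.image_subset_iff.2 hwN)
  refine le_antisymm (sup_le hspan inf_le_left) fun v hv => ?_
  obtain ⟨u, hu, hvu⟩ := hw.exists_sub_mem_commonKer (hN v hv)
  exact Submodule.mem_sup.2
    ⟨u, hu, v - u, ⟨N.sub_mem hv (hspan hu), hvu⟩, add_sub_cancel u v⟩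

/-- Gaussian elimination over the columns in `T`: the entries outside `L'` are those which can be
scaled to the pivot value `e`. -/
theorem exists_of_finset (N : Submodule R M) (L' : Submodule R L) (T : Finset ι)
    (hspan : ∀ v ∈ N, ∀ j ∈ T, f j v ∈ R ∙ e)
    (hpivot : ∀ v ∈ N, ∀ j ∈ T, f j v ∈ L' ∨ e ∈ R ∙ f j v) :
    ∃ P ⊆ T, ∃ w : ι → M, (∀ i ∈ P, w i ∈ N) ∧ IsPivotFamily f e P w ∧
      ∀ v ∈ N ⊓ commonKer f P, ∀ j ∈ T, f j v ∈ L' := by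
  classical
  induction T using Finset.induction_on with
  | empty => exact ⟨∅, subset_rfl, 0, by simp, ⟨by simp, by simp⟩, by simp⟩
  | insert j T hjT ih =>
    obtain ⟨hspan_j, hspan_T⟩ :
        (∀ v ∈ N, f j v ∈ R ∙ e) ∧ ∀ v ∈ N, ∀ i ∈ T, f i v ∈ R ∙ e := by
      simpa only [Finset.forall_mem_insert, forall_and] using hspan
    obtain ⟨P, hPT, w, hwN, hw, hP⟩ := ih hspan_T fun v hv i hi =>
      hpivot v hv i (Finset.mem_insert_of_mem hi)
    by_cases hj : ∀ v ∈ N ⊓ commonKer f P, f j v ∈ L'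
    · refine ⟨P, hPT.trans (Finset.subset_insert j T), w, hwN, hw, fun v hv => ?_⟩
      exact (Finset.forall_mem_insert ..).2 ⟨hj v hv, hP v hv⟩
    push Not at hj
    obtain ⟨v, ⟨hvN, hvP⟩, hvj⟩ := hj
    obtain ⟨c, hc⟩ := Submodule.mem_span_singleton.1
      ((hpivot v hvN j (Finset.mem_insert_self j T)).resolve_left hvj)
    choose! a ha using fun i (hi : i ∈ P) => Submodule.mem_span_singleton.1 (hspan_j _ (hwN i hi))
    have hcvN : c • v ∈ N := N.smul_mem c hvN
    refine ⟨insert j P, Finset.insert_subset_insert j hPT, _, ?_,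
      hw.insert_sub_smul (fun hjP => hjT (hPT hjP)) (by rw [map_smul, hc])
        (Submodule.smul_mem _ c hvP) ha, ?_⟩
    · intro i hi
      by_cases hij : i = j
      · simpa [hij] using hcvN
      · have hiP := Finset.mem_of_mem_insert_of_ne hi hij
        simpa [hij] using N.sub_mem (hwN i hiP) (N.smul_mem (a i) hcvN)
    · rintro u ⟨huN, huP⟩
      obtain ⟨huj, huP⟩ := (Finset.forall_mem_insert ..).1 (mem_commonKer.1 huP)
      refine (Finset.forall_mem_insert ..).2 ⟨huj ▸ L'.zero_mem, ?_⟩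
      exact hP u ⟨huN, mem_commonKer.2 huP⟩

end IsPivotFamily

end Pivots

section ResidueField

variable {R K : Type*} [CommRing R] [Field K] [Algebra R K] {π : R}

theorem dvd_or_isUnit_of_ker_eq_span (hsurj : Function.Surjective (algebraMap R K))
    (hker : RingHom.ker (algebraMap R K) = Ideal.span {π}) (hπ : π ^ 2 = 0) (x : R) :
    π ∣ x ∨ IsUnit x := by
  have hdvd : ∀ y, algebraMap R K y = 0 ↔ π ∣ y := fun y => by
    rw [← RingHom.mem_ker, hker, Ideal.mem_span_singleton]
  refine or_iff_not_imp_left.2 fun hx => ?_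
  obtain ⟨c, hc⟩ := hsurj (algebraMap R K x)⁻¹
  have hx0 : algebraMap R K x ≠ 0 := mt (hdvd x).1 hx
  obtain ⟨y, hy⟩ := (hdvd (c * x - 1)).1 (by simp [hc, hx0])
  have hnil : IsNilpotent (c * x - 1) := ⟨2, by rw [hy, mul_pow, hπ, zero_mul]⟩
  have hunit : IsUnit (c * x) := by simpa using hnil.isUnit_add_one
  exact isUnit_of_mul_isUnit_right hunit

theorem eq_zero_or_mem_span_of_dvd (hunit : ∀ x : R, π ∣ x ∨ IsUnit x) (hπ : π ^ 2 = 0)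
    {x : R} (hx : π ∣ x) : x = 0 ∨ π ∈ R ∙ x := by
  obtain ⟨y, rfl⟩ := hx
  rcases hunit y with ⟨z, rfl⟩ | hy
  · exact Or.inl (by rw [← mul_assoc, ← sq, hπ, zero_mul])
  · right
    rw [Ideal.submodule_span_eq, Ideal.mem_span_singleton]
    exact (hy.mul_right_dvd).2 dvd_rfl

theorem mem_span_singleton_of_surjective_algebraMap (hsurj : Function.Surjective (algebraMap R K))
    {a : K} (ha : a ≠ 0) (b : K) : b ∈ R ∙ a := by
  obtain ⟨c, hc⟩ := hsurj (b / a)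
  exact Submodule.mem_span_singleton.2 ⟨c, by rw [Algebra.smul_def, hc, div_mul_cancel₀ b ha]⟩

end ResidueField

section StandardForm

variable {R K α β : Type*} [CommRing R]

section Coordinates

variable [CommRing K] [Algebra R K]

variable (R K) in
/-- The `j`-th of the coordinates of `K^α × R^β` in the residue ring `K`. -/
def residueCoord (j : α) : (α → K) × (β → R) →ₗ[R] K :=
  LinearMap.proj j ∘ₗ LinearMap.fst R (α → K) (β → R)

variable (R K) in
/-- The `j`-th of the coordinates of `K^α × R^β` in the base ring `R`. -/
def baseCoord (j : β) : (α → K) × (β → R) →ₗ[R] R :=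
  LinearMap.proj j ∘ₗ LinearMap.snd R (α → K) (β → R)

@[simp]
theorem residueCoord_apply (j : α) (v : (α → K) × (β → R)) : residueCoord R K j v = v.1 j := rfl

@[simp]
theorem baseCoord_apply (j : β) (v : (α → K) × (β → R)) : baseCoord R K j v = v.2 j := rfl

variable (R K) in
/-- Reindexing of the coordinates: coordinate `i` of the image is coordinate `σ i`, respectively
`τ i`, of the argument. -/
def reindexCoords {α' β' : Type*} (σ : α' → α) (τ : β' → β) :
    (α → K) × (β → R) →ₗ[R] (α' → K) × (β' → R) :=
  (LinearMap.funLeft R K σ).prodMap (LinearMap.funLeft R R τ)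

@[simp]
theorem reindexCoords_apply {α' β' : Type*} (σ : α' → α) (τ : β' → β) (v : (α → K) × (β → R)) :
    reindexCoords R K σ τ v = (v.1 ∘ σ, v.2 ∘ τ) := rfl

/-- The rows `w₀`, `w₁`, `w₂` indexed by the pivot columns `P₀`, `P₁`, `P₂` generate `C` and
form, up to the order of the columns, the matrix
`[[I, * | 0, 0, π*], [0, * | I, *, *], [0, 0 | 0, πI, π*]]`. -/
structure IsStandardForm (π : R) (C : Submodule R ((α → K) × (β → R)))
    (P₀ : Finset α) (P₁ P₂ : Finset β)
    (w₀ : α → (α → K) × (β → R)) (w₁ w₂ : β → (α → K) × (β → R)) : Prop where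
  disjoint : Disjoint P₁ P₂
  pivot₀ : IsPivotFamily (residueCoord R K) 1 P₀ w₀
  pivot₁ : IsPivotFamily (baseCoord R K) 1 P₁ w₁
  pivot₂ : IsPivotFamily (baseCoord R K) π P₂ w₂
  zero₀₁ : ∀ i ∈ P₀, ∀ j ∈ P₁, (w₀ i).2 j = 0
  zero₀₂ : ∀ i ∈ P₀, ∀ j ∈ P₂, (w₀ i).2 j = 0
  zero₁₀ : ∀ i ∈ P₁, ∀ j ∈ P₀, (w₁ i).1 j = 0
  zero₂₁ : ∀ i ∈ P₂, ∀ j ∈ P₁, (w₂ i).2 j = 0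
  fst₂ : ∀ i ∈ P₂, (w₂ i).1 = 0
  dvd₀ : ∀ i ∈ P₀, ∀ j, π ∣ (w₀ i).2 j
  dvd₂ : ∀ i ∈ P₂, ∀ j, π ∣ (w₂ i).2 j
  span_eq : Submodule.span R (w₀ '' P₀ ∪ (w₁ '' P₁ ∪ w₂ '' P₂)) = C

theorem exists_pivotFamily_dvd {π : R} [Finite β]
    (hunit : ∀ x : R, π ∣ x ∨ IsUnit x) (C : Submodule R ((α → K) × (β → R))) :
    ∃ (P : Finset β) (w : β → (α → K) × (β → R)), (∀ i ∈ P, w i ∈ C) ∧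
      IsPivotFamily (baseCoord R K) 1 P w ∧
      ∀ v ∈ C ⊓ commonKer (baseCoord R K) P, ∀ j, π ∣ v.2 j := by
  have := Fintype.ofFinite β
  obtain ⟨P, -, w, hwC, hw, hP⟩ := IsPivotFamily.exists_of_finset
    (f := baseCoord R K) (e := 1) C (R ∙ π) Finset.univ (by simp) fun v _ j _ => by
      simpa only [Ideal.submodule_span_eq, Ideal.mem_span_singleton, isUnit_iff_dvd_one,
        baseCoord_apply] using hunit (v.2 j)
  refine ⟨P, w, hwC, hw, fun v hv j => ?_⟩
  simpa only [Ideal.submodule_span_eq, Ideal.mem_span_singleton, baseCoord_apply]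
    using hP v hv j (Finset.mem_univ j)

end Coordinates

variable [Field K] [Algebra R K] {π : R}

theorem exists_pivotFamilies_of_dvd [Finite α]
    (hsurj : Function.Surjective (algebraMap R K)) (hunit : ∀ x : R, π ∣ x ∨ IsUnit x)
    (hπ : π ^ 2 = 0) (N : Submodule R ((α → K) × (β → R))) (hN : ∀ v ∈ N, ∀ j, π ∣ v.2 j)
    (T : Finset β) (hT : ∀ v ∈ N, ∀ j ∉ T, v.2 j = 0) :
    ∃ (P₀ : Finset α) (P₂ : Finset β) (w₀ : α → (α → K) × (β → R)) (w₂ : β → (α → K) × (β → R)),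
      P₂ ⊆ T ∧ IsPivotFamily (residueCoord R K) 1 P₀ w₀ ∧ IsPivotFamily (baseCoord R K) π P₂ w₂ ∧
      (∀ i ∈ P₀, ∀ j ∈ P₂, (w₀ i).2 j = 0) ∧ (∀ i ∈ P₂, (w₂ i).1 = 0) ∧
      (∀ i ∈ P₂, w₂ i ∈ N) ∧ Submodule.span R (w₀ '' P₀) ⊔ Submodule.span R (w₂ '' P₂) = N := by
  have := Fintype.ofFinite α
  have hspan_π : ∀ v ∈ N, ∀ j, baseCoord R K j v ∈ R ∙ π := fun v hv j => by
    rw [Ideal.submodule_span_eq, Ideal.mem_span_singleton]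
    exact hN v hv j
  have hspan_one : ∀ v : (α → K) × (β → R), ∀ j, residueCoord R K j v ∈ R ∙ (1 : K) :=
    fun v j => mem_span_singleton_of_surjective_algebraMap hsurj one_ne_zero _
  obtain ⟨P₂, hP₂T, w₂, hw₂N, hw₂, hP₂⟩ := IsPivotFamily.exists_of_finset
    (f := baseCoord R K) (N ⊓ LinearMap.ker (LinearMap.fst R (α → K) (β → R))) ⊥ T
    (fun v hv j _ => hspan_π v hv.1 j)
    (fun v hv j _ => eq_zero_or_mem_span_of_dvd hunit hπ (hN v hv.1 j))
  obtain ⟨P₀, -, w₀, hw₀N, hw₀, hP₀⟩ := IsPivotFamily.exists_of_finset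
    (f := residueCoord R K) (e := 1) (N ⊓ commonKer (baseCoord R K) P₂) ⊥ Finset.univ
    (fun v _ j _ => hspan_one v j)
    (fun v _ j _ => or_iff_not_imp_left.2 fun hvj =>
      mem_span_singleton_of_surjective_algebraMap hsurj hvj 1)
  have hbot : N ⊓ commonKer (baseCoord R K) P₂ ⊓ commonKer (residueCoord R K) P₀ = ⊥ := by
    refine (Submodule.eq_bot_iff _).2 fun v hv => ?_
    have hfst : v.1 = 0 := funext fun j => hP₀ v hv j (Finset.mem_univ j)
    refine Prod.ext hfst (funext fun j => ?_)
    by_cases hj : j ∈ T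
    · exact hP₂ v ⟨⟨hv.1.1, hfst⟩, hv.1.2⟩ j hj
    · exact hT v hv.1.1 j hj
  refine ⟨P₀, P₂, w₀, w₂, hP₂T, hw₀, hw₂, fun i hi => mem_commonKer.1 (hw₀N i hi).2,
    fun i hi => (hw₂N i hi).2, fun i hi => (hw₂N i hi).1, ?_⟩
  calc Submodule.span R (w₀ '' P₀) ⊔ Submodule.span R (w₂ '' P₂)
      = Submodule.span R (w₂ '' P₂) ⊔ N ⊓ commonKer (baseCoord R K) P₂ := by
        rw [← hw₀.span_sup_inf_commonKer hw₀N fun v _ j _ => hspan_one v j, hbot, sup_bot_eq,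
          sup_comm]
    _ = N := hw₂.span_sup_inf_commonKer (fun i hi => (hw₂N i hi).1) fun v hv j _ => hspan_π v hv j

theorem exists_isStandardForm [Finite α] [Finite β]
    (hsurj : Function.Surjective (algebraMap R K))
    (hker : RingHom.ker (algebraMap R K) = Ideal.span {π}) (hπ : π ^ 2 = 0)
    (C : Submodule R ((α → K) × (β → R))) :
    ∃ P₀ P₁ P₂ w₀ w₁ w₂, IsStandardForm π C P₀ P₁ P₂ w₀ w₁ w₂ := by
  classical
  have := Fintype.ofFinite β
  have hunit := dvd_or_isUnit_of_ker_eq_span hsurj hker hπ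
  obtain ⟨P₁, u₁, hu₁C, hu₁, hN_dvd⟩ := exists_pivotFamily_dvd hunit C
  set N : Submodule R ((α → K) × (β → R)) := C ⊓ commonKer (baseCoord R K) P₁
  have hN_zero : ∀ v ∈ N, ∀ j ∈ P₁, v.2 j = 0 := fun v hv => mem_commonKer.1 hv.2
  obtain ⟨P₀, P₂, w₀, w₂, hP₂, hw₀, hw₂, h₀₂, h₂, hw₂N, hspan⟩ :=
    exists_pivotFamilies_of_dvd hsurj hunit hπ N hN_dvd P₁ᶜ fun v hv j hj =>
      hN_zero v hv j (by simpa using hj)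
  have hspan₀ : Submodule.span R (w₀ '' P₀) ≤ N := hspan ▸ le_sup_left
  have hw₀N : ∀ i ∈ P₀, w₀ i ∈ N := fun i hi =>
    hspan₀ (Submodule.subset_span (Set.mem_image_of_mem w₀ hi))
  -- Subtracting combinations of the rows `w₀ i` clears the columns `P₀` of `u₁`; the columns `P₁`
  -- are unaffected because `w₀` vanishes there.
  choose x hx hx₀ using fun i => hw₀.exists_sub_mem_commonKer (v := u₁ i) fun j _ =>
    mem_span_singleton_of_surjective_algebraMap hsurj one_ne_zero _
  have hxN : ∀ i, x i ∈ N := fun i => hspan₀ (hx i)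
  have hw₁ : IsPivotFamily (baseCoord R K) 1 P₁ (u₁ - x) := hu₁.sub fun i => (hxN i).2
  refine ⟨P₀, P₁, P₂, w₀, u₁ - x, w₂,
    { disjoint := disjoint_compl_right.mono_right hP₂
      pivot₀ := hw₀
      pivot₁ := hw₁
      pivot₂ := hw₂
      zero₀₁ := fun i hi => hN_zero _ (hw₀N i hi)
      zero₀₂ := h₀₂
      zero₁₀ := fun i _ => mem_commonKer.1 (hx₀ i)
      zero₂₁ := fun i hi => hN_zero _ (hw₂N i hi)
      fst₂ := h₂
      dvd₀ := fun i hi => hN_dvd _ (hw₀N i hi)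
      dvd₂ := fun i hi => hN_dvd _ (hw₂N i hi)
      span_eq := ?_ }⟩
  rw [Submodule.span_union, Submodule.span_union, sup_left_comm, hspan]
  exact hw₁.span_sup_inf_commonKer (fun i hi => C.sub_mem (hu₁C i hi) (hxN i).1) (by simp)

end StandardForm

section GaloisRing

theorem ker_bar : RingHom.ker bar = Ideal.span {2} := by
  ext x
  rw [RingHom.mem_ker, Ideal.mem_span_singleton]
  revert x
  unfold bar
  decide

variable (h : Z4[X])

theorem barR_surjective : Function.Surjective (barR h) :=
  Ideal.quotientMap_surjective (Polynomial.map_surjective bar (ZMod.castHom_surjective _))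

theorem comap_span_map_bar :
    (Ideal.span {h.map bar}).comap (mapRingHom bar) = Ideal.span {h} ⊔ Ideal.span {2} := by
  have hsurj : Function.Surjective (mapRingHom bar) :=
    Polynomial.map_surjective bar (ZMod.castHom_surjective _)
  have hspan : Ideal.span {h.map bar} = (Ideal.span {h}).map (mapRingHom bar) := by
    rw [Ideal.map_span, Set.image_singleton, coe_mapRingHom]
  rw [hspan, Ideal.comap_map_of_surjective' _ hsurj, ker_mapRingHom, ker_bar, Ideal.map_span,
    Set.image_singleton, map_ofNat]

theorem ker_barR : RingHom.ker (barR h) = Ideal.span {2} := by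
  have hcomp : (barR h).comp (Ideal.Quotient.mk _) =
      (Ideal.Quotient.mk (Ideal.span {h.map bar})).comp (mapRingHom bar) :=
    Ideal.quotientMap_comp_mk _
  rw [← Ideal.map_comap_of_surjective _ Ideal.Quotient.mk_surjective (RingHom.ker (barR h)),
    RingHom.comap_ker, hcomp, ← RingHom.comap_ker, Ideal.mk_ker, comap_span_map_bar, Ideal.map_sup,
    Ideal.map_quotient_self, bot_sup_eq, Ideal.map_span, Set.image_singleton, map_ofNat]

theorem two_sq_eq_zero : (2 : R4 h) ^ 2 = 0 := by
  have h4 : (2 : Z4) ^ 2 = 0 := by decide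
  simpa only [map_pow, map_ofNat, map_zero] using congrArg (algebraMap Z4 (R4 h)) h4

/-- `R₂` as an `R₄`-algebra via reduction mod 2; then `γ • v` is definitionally `smulStar h γ v`. -/
instance residueAlgebra : Algebra (R4 h) (R2 h) := (barR h).toAlgebra

end GaloisRing

section Relabelling

theorem exists_equiv_sum_fin {κ : Type*} [Fintype κ] {n : ℕ} (g : κ ↪ Fin n) {l : ℕ}
    (hl : n - Fintype.card κ = l) : ∃ e : Fin n ≃ κ ⊕ Fin l, ∀ a, e.symm (.inl a) = g a := by
  classical
  have hcard : Fintype.card ↥(Set.range g)ᶜ = l := by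
    rw [Fintype.card_compl_set, Fintype.card_fin, Set.card_range_of_injective g.injective, hl]
  refine ⟨(Equiv.Set.sumCompl (Set.range g)).symm.trans
    ((Equiv.ofInjective g g.injective).symm.sumCongr (Fintype.equivFinOfCardEq hcard)), ?_⟩
  simp

theorem exists_equiv_sum_sum_fin {k l n : ℕ} (p : Fin k ↪ Fin n) (q : Fin l ↪ Fin n)
    (hpq : ∀ i j, p i ≠ q j) :
    ∃ e : Fin n ≃ Fin k ⊕ Fin l ⊕ Fin (n - k - l),
      (∀ i, e.symm (.inl i) = p i) ∧ ∀ j, e.symm (.inr (.inl j)) = q j := by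
  obtain ⟨e, he⟩ := exists_equiv_sum_fin (l := n - k - l)
    ⟨Sum.elim p q, p.injective.sumElim q.injective hpq⟩ (by simp [Nat.sub_sub])
  exact ⟨e.trans (Equiv.sumAssoc _ _ _), fun i => he (.inl i), fun j => he (.inr j)⟩

end Relabelling

section Codes

variable {h : Z4[X]}

/-- A `Z₂Z₄[ξ]`-linear code as a submodule. -/
def IsZ2Z4Linear.toSubmodule {r s : ℕ} {C : Set ((Fin r → R2 h) × (Fin s → R4 h))}
    (hC : IsZ2Z4Linear h C) : Submodule (R4 h) ((Fin r → R2 h) × (Fin s → R4 h)) where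
  carrier := C
  zero_mem' := hC.1
  add_mem' {u v} hu hv := hC.2.1 u hu v hv
  smul_mem' γ u hu := hC.2.2 γ u hu

theorem rowSpan_eq_span {ι α β : Type*} [Fintype ι] (rows : ι → (α → R2 h) × (β → R4 h)) :
    rowSpan h rows = Submodule.span (R4 h) (Set.range rows) := by
  ext v
  rw [SetLike.mem_coe, Submodule.mem_span_range_iff_exists_fun]
  exact exists_congr fun c => eq_comm

variable {r s : ℕ} {P₀ : Finset (Fin r)} {P₁ P₂ : Finset (Fin s)}
  {w₀ : Fin r → (Fin r → R2 h) × (Fin s → R4 h)} {w₁ w₂ : Fin s → (Fin r → R2 h) × (Fin s → R4 h)}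
  {N : Submodule (R4 h) ((Fin r → R2 h) × (Fin s → R4 h))}

theorem IsStandardForm.exists_stdGenRows_eq (H : IsStandardForm 2 N P₀ P₁ P₂ w₀ w₁ w₂)
    {k0 k1 k2 : ℕ} (p₀ : Fin k0 ↪ Fin r) (p₁ : Fin k1 ↪ Fin s) (p₂ : Fin k2 ↪ Fin s)
    (hp₀ : ∀ i, p₀ i ∈ P₀) (hp₁ : ∀ i, p₁ i ∈ P₁) (hp₂ : ∀ i, p₂ i ∈ P₂)
    (e2 : Fin r ≃ Fin k0 ⊕ Fin (r - k0)) (e4 : Fin s ≃ Fin k1 ⊕ Fin k2 ⊕ Fin (s - k1 - k2))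
    (he₀ : ∀ i, e2.symm (.inl i) = p₀ i) (he₁ : ∀ i, e4.symm (.inl i) = p₁ i)
    (he₂ : ∀ i, e4.symm (.inr (.inl i)) = p₂ i) :
    ∃ A01b S T A01 A02 A12, ∀ row, stdGenRows h (r := r) (s := s) A01b S T A01 A02 A12 row =
      reindexCoords (R4 h) (R2 h) e2.symm e4.symm
        (Sum.elim (w₀ ∘ p₀) (Sum.elim (w₁ ∘ p₁) (w₂ ∘ p₂)) row) := by
  choose t₀ ht₀ using fun i => H.dvd₀ _ (hp₀ i)
  choose t₂ ht₂ using fun i => H.dvd₂ _ (hp₂ i)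
  refine ⟨fun i j => (w₀ (p₀ i)).1 (e2.symm (.inr j)), fun i j => (w₁ (p₁ i)).1 (e2.symm (.inr j)),
    fun i j => t₀ i (e4.symm (.inr (.inr j))), fun i j => (w₁ (p₁ i)).2 (e4.symm (.inr (.inl j))),
    fun i j => (w₁ (p₁ i)).2 (e4.symm (.inr (.inr j))),
    fun i j => t₂ i (e4.symm (.inr (.inr j))), fun row => ?_⟩
  have hI₀ := H.pivot₀.apply_embedding p₀ hp₀
  have hI₁ := H.pivot₁.apply_embedding p₁ hp₁
  have hI₂ := H.pivot₂.apply_embedding p₂ hp₂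
  simp only [residueCoord_apply, baseCoord_apply] at hI₀ hI₁ hI₂
  refine Prod.ext (funext fun col => ?_) (funext fun col => ?_)
  · rcases row with i | i | i <;> rcases col with j | j <;>
      simp [stdGenRows, he₀, hI₀, H.zero₁₀, H.fst₂, hp₀, hp₁, hp₂]
  · rcases row with i | i | i <;> rcases col with j | j | j <;>
      simp [stdGenRows, he₁, he₂, hI₁, hI₂, H.zero₀₁, H.zero₀₂, H.zero₂₁, hp₀, hp₁, hp₂, ← ht₀,
        ← ht₂]

theorem IsStandardForm.isTypeCode (H : IsStandardForm 2 N P₀ P₁ P₂ w₀ w₁ w₂) :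
    IsTypeCode h r s P₀.card P₁.card P₂.card N := by
  let p₀ := (P₀.orderEmbOfFin rfl).toEmbedding
  let p₁ := (P₁.orderEmbOfFin rfl).toEmbedding
  let p₂ := (P₂.orderEmbOfFin rfl).toEmbedding
  have hp₀ : ∀ i, p₀ i ∈ P₀ := P₀.orderEmbOfFin_mem rfl
  have hp₁ : ∀ i, p₁ i ∈ P₁ := P₁.orderEmbOfFin_mem rfl
  have hp₂ : ∀ i, p₂ i ∈ P₂ := P₂.orderEmbOfFin_mem rfl
  have hne : ∀ i j, p₁ i ≠ p₂ j := fun i j hij =>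
    Finset.disjoint_left.1 H.disjoint (hp₁ i) (hij ▸ hp₂ j)
  obtain ⟨e2, he₀⟩ := exists_equiv_sum_fin p₀ (l := r - P₀.card) (by simp)
  obtain ⟨e4, he₁, he₂⟩ := exists_equiv_sum_sum_fin p₁ p₂ hne
  obtain ⟨A01b, S, T, A01, A02, A12, hrows⟩ :=
    H.exists_stdGenRows_eq p₀ p₁ p₂ hp₀ hp₁ hp₂ e2 e4 he₀ he₁ he₂
  refine ⟨A01b, S, T, A01, A02, A12, e2, e4, ?_⟩
  let σ := reindexCoords (R4 h) (R2 h) e2.symm e4.symm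
  have hrange : Set.range (Sum.elim (w₀ ∘ p₀) (Sum.elim (w₁ ∘ p₁) (w₂ ∘ p₂))) =
      w₀ '' P₀ ∪ (w₁ '' P₁ ∪ w₂ '' P₂) := by
    simp [Set.Sum.elim_range, Set.range_comp, p₀, p₁, p₂]
  calc σ '' N = Submodule.span (R4 h) (σ '' (w₀ '' P₀ ∪ (w₁ '' P₁ ∪ w₂ '' P₂))) := by
        rw [← H.span_eq, ← Submodule.map_coe, Submodule.map_span]
    _ = Submodule.span (R4 h) (Set.range (stdGenRows h A01b S T A01 A02 A12)) := by
        rw [← hrange, ← Set.range_comp, funext hrows, Function.comp_def]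
    _ = rowSpan h (stdGenRows h A01b S T A01 A02 A12) := (rowSpan_eq_span _).symm

end Codes

theorem exists_standard_form_generator_matrix_general {h : Z4[X]} (hirr : Irreducible (h.map bar))
    {r s : ℕ} {C : Set ((Fin r → R2 h) × (Fin s → R4 h))} (hC : IsZ2Z4Linear h C) :
    ∃ k0 k1 k2 : ℕ, IsTypeCode h r s k0 k1 k2 C := by
  have : (Ideal.span {h.map bar}).IsMaximal := PrincipalIdealRing.isMaximal_of_irreducible hirr
  let : Field (R2 h) := Ideal.Quotient.field _
  obtain ⟨P₀, P₁, P₂, w₀, w₁, w₂, H⟩ :=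
    exists_isStandardForm (barR_surjective h) (ker_barR h) (two_sq_eq_zero h) hC.toSubmodule
  exact ⟨P₀.card, P₁.card, P₂.card, H.isTypeCode⟩

/-- Every `Z₂Z₄[ξ]`-linear code is permutation equivalent to a code
with a generator matrix in standard form. -/
theorem exists_standard_form_generator_matrix
    (m : ℕ) (hm : 1 ≤ m) (h : Z4[X]) (hbp : BasicPrimitive h m)
    (r s : ℕ) (hr : 0 < r) (hs : 0 < s)
    (C : Set ((Fin r → R2 h) × (Fin s → R4 h))) (hC : IsZ2Z4Linear h C) :
    ∃ k0 k1 k2 : ℕ, IsTypeCode h r s k0 k1 k2 C := by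
  exact exists_standard_form_generator_matrix_general hbp.2.2.1 hC
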